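/- Let k_F > 0, V̂ : ℤ³ → [0,∞), ℓ ∈ ℤ³∖{0}, and q ∈ L_ℓ. With h(ℓ), P(ℓ) and M(ℓ) := h(ℓ)^{-1/2}( h(ℓ)^{1/2}(h(ℓ)+2P(ℓ))h(ℓ)^{1/2} )^{1/2} h(ℓ)^{-1/2} as below, the diagonal matrix entries satisfy the two integral identities: ( M(ℓ) − Id )_{q,q} = (2/π) ∫₀^∞ 2 g_ℓ t² (t² + λ_{ℓ,q}²)^{-2} / ( 1 + 2 g_ℓ Σ_{p∈L_ℓ} λ_{ℓ,p}(t² + λ_{ℓ,p}²)^{-1} ) dt and ( Id − M(ℓ)^{-1} )_{q,q} = (2/π) ∫₀^∞ 2 g_ℓ λ_{ℓ,q}² (t² + λ_{ℓ,q}²)^{-2} / ( 1 + 2 g_ℓ Σ_{p∈L_ℓ} λ_{ℓ,p}(t² + λ_{ℓ,p}²)^{-1} ) dt. -/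

import Mathlib

/-!
On the finite lens the matrix `A = h^{1/2}(h + 2P)h^{1/2}` equals `h² + 2g |√λ⟩⟨√λ|`, a rank-one
perturbation of a diagonal matrix, and `B = A^{1/2}`. For `x ≥ 0`,
`x = (2/π) ∫₀^∞ x²/(x² + t²) dt`, and `1/x = (2/π) ∫₀^∞ dt/(x² + t²)` for `x > 0`. Averaging over
the spectral measure of `B` at `e_q` (`exists_spectral_weights`) expresses `B_{qq}` and
`(B⁻¹)_{qq}` as integrals of the diagonal resolvent entry `((A + t²)⁻¹)_{qq}`. The Sherman–Morrison
formula (`resolvent_diag`) evaluates that entry as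
`1/(λ_q² + t²) - 2g λ_q (λ_q² + t²)⁻² / (1 + 2g ∑ λ_p/(λ_p² + t²))`; the first term contributes
`λ_q`, respectively `1/λ_q`, and the second one the stated integrals (`diag_sqrt`). Finally
`M_{qq} = B_{qq}/λ_q` and `(M⁻¹)_{qq} = λ_q (B⁻¹)_{qq}`.

The remaining lemmas translate functions on `ℤ³ × ℤ³` supported in the lens into matrices indexed by
the lens, turning the sums over `ℤ³` into finite sums.
-/

open scoped BigOperators
open MeasureTheory

noncomputable section

attribute [local instance] Classical.propDecidable

/-- The momentum lattice `ℤ³`. -/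
abbrev Z3 : Type := Fin 3 → ℤ

/-- Squared Euclidean norm `|p|²` of an integer vector, as a real number. -/
def nsq (p : Z3) : ℝ := ∑ i, ((p i : ℝ)) ^ 2

/-- The Fermi ball `B_F = {k ∈ ℤ³ : |k| ≤ k_F}`. -/
def BF (kF : ℝ) : Set Z3 := {k | nsq k ≤ kF ^ 2}

/-- The lens `L_ℓ = B_F^c ∩ (B_F + ℓ)`. -/
def lens (kF : ℝ) (ℓ : Z3) : Set Z3 := {p | p ∉ BF kF ∧ p - ℓ ∈ BF kF}

/-- The excitation energy `λ_{ℓ,p} = (|p|² − |p−ℓ|²)/2`. -/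
def lam (ℓ p : Z3) : ℝ := (nsq p - nsq (p - ℓ)) / 2

/-- The energy gap `e(q) = | |q|² − min_{p ∈ B_F^c} |p|² + 1/2 |`. -/
def efun (kF : ℝ) (q : Z3) : ℝ := |nsq q - sInf (nsq '' (BF kF)ᶜ) + 1 / 2|

/-- The coupling coefficient `g_ℓ = k_F⁻¹ V̂(ℓ) / (2(2π)³)`. -/
def gcoef (kF : ℝ) (V : Z3 → ℝ) (ℓ : Z3) : ℝ := kF⁻¹ * V ℓ / (2 * (2 * Real.pi) ^ 3)

/-- The random phase approximation contribution `n^{RPA}(q)` (Eq. `eq:nqb`). -/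
def nRPA (kF : ℝ) (V : Z3 → ℝ) (q : Z3) : ℝ :=
  ∑' ℓ : Z3, if ℓ ≠ 0 ∧ q ∈ lens kF ℓ then
    (1 / Real.pi) * ∫ t in Set.Ioi (0 : ℝ),
      (gcoef kF V ℓ * (t ^ 2 - (lam ℓ q) ^ 2) * (((t ^ 2 + (lam ℓ q) ^ 2) ^ 2)⁻¹)) /
        (1 + 2 * gcoef kF V ℓ *
          ∑' p : Z3, if p ∈ lens kF ℓ then lam ℓ p * (t ^ 2 + (lam ℓ p) ^ 2)⁻¹ else 0)
  else 0

/-- Product of two (lens-supported) matrices, realized as functions on `ℤ³ × ℤ³`. -/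
def matMulC (A B : Z3 → Z3 → ℂ) : Z3 → Z3 → ℂ := fun r s => ∑' t : Z3, A r t * B t s

/-- The identity matrix of `ℓ²(L)` for a subset `L ⊆ ℤ³`. -/
def idOn (L : Set Z3) : Z3 → Z3 → ℂ := fun r t => if r = t ∧ r ∈ L then 1 else 0

/-- A matrix is supported on `L × L`. -/
def suppOn (L : Set Z3) (A : Z3 → Z3 → ℂ) : Prop :=
  ∀ r t : Z3, (r ∉ L ∨ t ∉ L) → A r t = 0

/-- A matrix is positive semidefinite as an operator on `ℓ²(L)`. -/
def IsPSDOn (L : Set Z3) (A : Z3 → Z3 → ℂ) : Prop :=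
  (∀ r t : Z3, A r t = starRingEnd ℂ (A t r)) ∧
  ∀ v : Z3 → ℂ, (∀ p : Z3, p ∉ L → v p = 0) →
    0 ≤ (∑' rt : Z3 × Z3, starRingEnd ℂ (v rt.1) * A rt.1 rt.2 * v rt.2).re

/-- The explicit diagonal matrix `h(ℓ)^{1/2}` with entries `√λ_{ℓ,p}` on the lens. -/
def sqrtH (kF : ℝ) (ℓ : Z3) : Z3 → Z3 → ℂ :=
  fun r t => if r = t ∧ r ∈ lens kF ℓ then ((Real.sqrt (lam ℓ r) : ℝ) : ℂ) else 0

/-- The explicit diagonal matrix `h(ℓ)^{−1/2}` with entries `(√λ_{ℓ,p})⁻¹` on the lens. -/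
def invSqrtH (kF : ℝ) (ℓ : Z3) : Z3 → Z3 → ℂ :=
  fun r t => if r = t ∧ r ∈ lens kF ℓ then (((Real.sqrt (lam ℓ r))⁻¹ : ℝ) : ℂ) else 0

/-- The matrix `h(ℓ) + 2P(ℓ)` on the lens, where `h(ℓ)` is diagonal with entries
`λ_{ℓ,p}` and `P(ℓ)` has all entries equal to `g_ℓ`. -/
def hP2 (kF : ℝ) (V : Z3 → ℝ) (ℓ : Z3) : Z3 → Z3 → ℂ :=
  fun r t => if r ∈ lens kF ℓ ∧ t ∈ lens kF ℓ then
    ((if r = t then (lam ℓ r : ℂ) else 0) + 2 * ((gcoef kF V ℓ : ℝ) : ℂ)) else 0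

/-! ### The spectral measure at a basis vector -/

open Matrix in
/-- Spectral data of a positive semidefinite `B` seen from the basis vector `e_q`: the eigenvalues
`β i` and the weights `w i = |⟨e_q, u_i⟩|²`. The diagonal entries at `q` of `B`, of the resolvent
`(B² + t²)⁻¹` and of `B⁻¹` are the corresponding `w`-averages; the resolvent is described by the
solution `y` of `(B² + t²) y = e_q`. -/
lemma exists_spectral_weights {ι : Type*} [Fintype ι] (B : Matrix ι ι ℂ)
    (hB : B.IsHermitian) (hpos : ∀ v : ι → ℂ, 0 ≤ (star v ⬝ᵥ B *ᵥ v).re) (q : ι) :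
    ∃ β w : ι → ℝ, (∀ i, 0 ≤ β i) ∧ ∑ i, w i = 1 ∧
      B q q = ((∑ i, w i * β i : ℝ) : ℂ) ∧
      (∀ t : ℝ, t ≠ 0 → ∀ y : ι → ℂ,
        (B * B) *ᵥ y + (t ^ 2 : ℂ) • y = Pi.single q 1 →
          y q = ((∑ i, w i * (β i ^ 2 + t ^ 2)⁻¹ : ℝ) : ℂ)) ∧
      (∀ C : Matrix ι ι ℂ, B * C = 1 →
        (∀ i, β i ≠ 0) ∧ C q q = ((∑ i, w i * (β i)⁻¹ : ℝ) : ℂ)) := by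
  set U : Matrix ι ι ℂ := hB.eigenvectorUnitary.1 with hU
  have hUU : U * star U = 1 := Unitary.mul_star_self_of_mem hB.eigenvectorUnitary.2
  have hUU' : star U * U = 1 := Unitary.star_mul_self_of_mem hB.eigenvectorUnitary.2
  set β := hB.eigenvalues with hβ
  -- `X f` is the matrix `f(B)` of the functional calculus
  let X : (ℝ → ℝ) → Matrix ι ι ℂ := fun f => U * diagonal (fun i => ((f (β i) : ℝ) : ℂ)) * star U
  have hXmul : ∀ f g, X f * X g = X (fun x => f x * g x) := by
    intro f g
    calc X f * X g = U * diagonal (fun i => ((f (β i) : ℝ) : ℂ)) * (star U * U) *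
          diagonal (fun i => ((g (β i) : ℝ) : ℂ)) * star U := by simp only [X, Matrix.mul_assoc]
      _ = _ := by
        rw [hUU', Matrix.mul_one, Matrix.mul_assoc U, diagonal_mul_diagonal]
        simp [X]
  have hXB : B = X id := by
    have := hB.spectral_theorem
    rw [Unitary.conjStarAlgAut_apply] at this
    exact this
  have hX1 : ∀ f : ℝ → ℝ, (∀ i, f (β i) = 1) → X f = 1 := by
    intro f hf
    simp [X, hf, hUU]
  have hXq : ∀ f, X f q q = ((∑ i, Complex.normSq (U q i) * f (β i) : ℝ) : ℂ) := by
    intro f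
    change ((U * diagonal (fun i => ((f (β i) : ℝ) : ℂ))) * star U) q q = _
    rw [Matrix.mul_apply]
    simp only [mul_diagonal, star_apply]
    push_cast
    refine Finset.sum_congr rfl fun i _ => ?_
    rw [← Complex.mul_conj]
    simp only [RCLike.star_def]
    ring
  have hXadd : ∀ f g, X f + X g = X (fun x => f x + g x) := by
    intro f g
    simp only [X, ← Matrix.add_mul, ← Matrix.mul_add, diagonal_add]
    simp
  have hXc : ∀ c : ℝ, (c : ℂ) • (1 : Matrix ι ι ℂ) = X (fun _ => c) := by
    intro c
    have : (fun _ : ι => (c : ℂ)) = (c : ℂ) • (1 : ι → ℂ) := by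
      ext; simp
    simp only [X]
    rw [this, diagonal_smul]
    simp [hUU]
  clear_value X
  refine ⟨β, fun i => Complex.normSq (U q i), ?_, ?_, ?_, ?_, ?_⟩
  · intro i
    rw [hβ, hB.eigenvalues_eq]
    exact hpos _
  · have h := hXq (fun _ => 1)
    rw [hX1 (fun _ => 1) (fun _ => rfl)] at h
    simp only [one_apply_eq, mul_one] at h
    exact_mod_cast h.symm
  · exact (congrFun (congrFun hXB q) q).trans (hXq id)
  · intro t ht y hy
    have hne : ∀ x : ℝ, x ^ 2 + t ^ 2 ≠ 0 := fun x => by positivity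
    have h1 : X (fun x => (x ^ 2 + t ^ 2)⁻¹) * (B * B + (t ^ 2 : ℂ) • 1) = 1 := by
      have : B * B + (t ^ 2 : ℂ) • 1 = X (fun x => x ^ 2 + t ^ 2) := by
        calc B * B + (t ^ 2 : ℂ) • 1 = X (fun x => id x * id x) + X (fun _ => t ^ 2) := by
              rw [← hXmul, ← hXB, ← hXc, Complex.ofReal_pow]
          _ = X (fun x => x ^ 2 + t ^ 2) := by
              rw [hXadd]
              congr 1
              ext x
              simp [sq]
      rw [this]
      exact (hXmul _ _).trans (hX1 _ fun i => inv_mul_cancel₀ (hne _))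
    have h2 : (B * B + (t ^ 2 : ℂ) • (1 : Matrix ι ι ℂ)) *ᵥ y = Pi.single q 1 := by
      rw [add_mulVec, smul_mulVec, one_mulVec, hy]
    have h3 : y = X (fun x => (x ^ 2 + t ^ 2)⁻¹) *ᵥ Pi.single q 1 := by
      rw [← h2, mulVec_mulVec, h1, one_mulVec]
    rw [h3, mulVec_single_one]
    exact hXq (fun x => (x ^ 2 + t ^ 2)⁻¹)
  · intro C hC
    have hβ0 : ∀ i, β i ≠ 0 := by
      have hdet : B.det ≠ 0 := fun h => by
        have := congrArg det hC
        rw [det_mul, h] at this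
        simp at this
      intro i hi
      apply hdet
      rw [hB.det_eq_prod_eigenvalues]
      refine Finset.prod_eq_zero (Finset.mem_univ i) ?_
      change ((β i : ℝ) : ℂ) = 0
      rw [hi, Complex.ofReal_zero]
    refine ⟨hβ0, ?_⟩
    have h1 : X (fun x => x⁻¹) * B = 1 := by
      calc X (fun x => x⁻¹) * B = X (fun x => x⁻¹) * X id := congrArg _ hXB
        _ = X (fun x => x⁻¹ * id x) := hXmul _ _
        _ = 1 := hX1 _ fun i => inv_mul_cancel₀ (hβ0 i)
    have h2 : C = X (fun x => x⁻¹) := by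
      rw [← Matrix.one_mul C, ← h1, Matrix.mul_assoc, hC, Matrix.mul_one]
    rw [h2]
    exact hXq (fun x => x⁻¹)

/-! ### Scalar integrals -/

/-- `∫₀^∞ dt / (b² + t²) = π / (2b)`. -/
lemma integral_Ioi_inv_sq_add_sq {b : ℝ} (hb : 0 < b) :
    IntegrableOn (fun t : ℝ => (b ^ 2 + t ^ 2)⁻¹) (Set.Ioi 0) ∧
      ∫ t in Set.Ioi (0 : ℝ), (b ^ 2 + t ^ 2)⁻¹ = Real.pi / 2 * b⁻¹ := by
  have e : (fun t : ℝ => (b ^ 2 + t ^ 2)⁻¹) = fun t => b⁻¹ ^ 2 * (1 + (b⁻¹ * t) ^ 2)⁻¹ := by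
    ext t
    have : b ^ 2 + t ^ 2 ≠ 0 := by positivity
    have : (1 + (b⁻¹ * t) ^ 2) ≠ 0 := by positivity
    field_simp
  have hb' : 0 < b⁻¹ := inv_pos.2 hb
  rw [e]
  constructor
  · refine Integrable.const_mul ?_ _
    exact (integrableOn_Ioi_comp_mul_left_iff (fun x : ℝ => (1 + x ^ 2)⁻¹) 0 hb').2
      integrable_inv_one_add_sq.integrableOn
  · rw [integral_const_mul, integral_comp_mul_left_Ioi (fun x : ℝ => (1 + x ^ 2)⁻¹) 0 hb',
      integral_Ioi_inv_one_add_sq]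
    simp
    field_simp


/-- `b = (2/π) ∫₀^∞ b² / (b² + t²) dt`, including the trivial case
`b = 0`. -/
lemma integral_Ioi_sq_div_sq_add_sq {b : ℝ} (hb : 0 ≤ b) :
    IntegrableOn (fun t : ℝ => b ^ 2 * (b ^ 2 + t ^ 2)⁻¹) (Set.Ioi 0) ∧
      ∫ t in Set.Ioi (0 : ℝ), b ^ 2 * (b ^ 2 + t ^ 2)⁻¹ = Real.pi / 2 * b := by
  rcases hb.eq_or_lt with rfl | hb
  · simp
  · obtain ⟨h1, h2⟩ := integral_Ioi_inv_sq_add_sq hb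
    refine ⟨h1.const_mul _, ?_⟩
    rw [integral_const_mul, h2]
    field_simp

/-! ### The rank-one perturbation and its square root -/

open Matrix in
/-- The `(q, q)` entry of `(h² + 2g |√λ⟩⟨√λ| + t²)⁻¹`, where `h = diag l` and `√λ` has entries
`√(l p)`, by the Sherman–Morrison formula. -/
lemma resolvent_diag {ι : Type*} [Fintype ι] (l : ι → ℝ) (hl : ∀ i, 0 < l i) (g : ℝ) (hg : 0 ≤ g)
    (A : Matrix ι ι ℂ)
    (hA : ∀ r s, A r s = ((√(l r) * ((if r = s then l r else 0) + 2 * g) * √(l s) : ℝ) : ℂ))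
    (q : ι) (t : ℝ) :
    ∃ y : ι → ℂ, A *ᵥ y + (t ^ 2 : ℂ) • y = Pi.single q 1 ∧
      y q = (((l q ^ 2 + t ^ 2)⁻¹ - l q * (2 * g * ((t ^ 2 + l q ^ 2) ^ 2)⁻¹ /
        (1 + 2 * g * ∑ p, l p * (t ^ 2 + l p ^ 2)⁻¹)) : ℝ) : ℂ) := by
  set S : ℝ := 1 + 2 * g * ∑ p, l p * (t ^ 2 + l p ^ 2)⁻¹ with hS
  have hS0 : 0 < S := by
    have : 0 ≤ ∑ p, l p * (t ^ 2 + l p ^ 2)⁻¹ :=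
      Finset.sum_nonneg fun p _ => by have := hl p; positivity
    positivity
  have hd : ∀ p, t ^ 2 + l p ^ 2 ≠ 0 := fun p => by have := hl p; positivity
  have hsq : ∀ p, √(l p) * √(l p) = l p := fun p => Real.mul_self_sqrt (hl p).le
  let y : ι → ℝ := fun p => (if p = q then (t ^ 2 + l q ^ 2)⁻¹ else 0) -
    2 * g * √(l p) * √(l q) * (t ^ 2 + l p ^ 2)⁻¹ * (t ^ 2 + l q ^ 2)⁻¹ / S
  -- the overlap of `y` with the rank-one direction
  have hsum : ∑ p, √(l p) * y p = √(l q) * (t ^ 2 + l q ^ 2)⁻¹ / S := by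
    have e : ∀ p, √(l p) * y p = (if p = q then √(l q) * (t ^ 2 + l q ^ 2)⁻¹ else 0) -
        2 * g * (l p * (t ^ 2 + l p ^ 2)⁻¹) * (√(l q) * (t ^ 2 + l q ^ 2)⁻¹ / S) := by
      intro p
      have hp := hsq p
      by_cases h : p = q
      · subst h
        simp only [y, if_true]
        linear_combination
          (-(2 * g * (t ^ 2 + l p ^ 2)⁻¹ * √(l p) * (t ^ 2 + l p ^ 2)⁻¹ / S)) * hp
      · simp only [y, h, if_false]
        linear_combination
          (-(2 * g * (t ^ 2 + l p ^ 2)⁻¹ * √(l q) * (t ^ 2 + l q ^ 2)⁻¹ / S)) * hp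
    simp only [e]
    rw [Finset.sum_sub_distrib, ← Finset.sum_mul, ← Finset.mul_sum]
    simp only [Finset.sum_ite_eq', Finset.mem_univ, if_true]
    have : 2 * g * ∑ p, l p * (t ^ 2 + l p ^ 2)⁻¹ = S - 1 := by rw [hS]; ring
    rw [this]
    field_simp
    ring
  refine ⟨fun p => (y p : ℂ), ?_, ?_⟩
  · ext r
    have hreal : ∑ s, √(l r) * ((if r = s then l r else 0) + 2 * g) * √(l s) * y s + t ^ 2 * y r
        = if r = q then 1 else 0 := by
      have e : ∀ s, √(l r) * ((if r = s then l r else 0) + 2 * g) * √(l s) * y s =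
          (if r = s then l r ^ 2 * y r else 0) + 2 * g * √(l r) * (√(l s) * y s) := by
        intro s
        by_cases h : r = s
        · subst h
          simp only [if_true]
          linear_combination (l r * y r) * hsq r
        · simp [h]; ring
      simp only [e]
      rw [Finset.sum_add_distrib, ← Finset.mul_sum, hsum]
      simp only [Finset.sum_ite_eq, Finset.mem_univ, if_true]
      have h1 := hd r
      have h2 := hd q
      by_cases h : r = q
      · subst h; simp only [y, if_true]; field_simp; ring
      · simp only [y, h, if_false]; field_simp; ring
    simp only [Pi.add_apply, Pi.smul_apply, smul_eq_mul, mulVec, dotProduct, hA, Pi.single_apply]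
    rw [show (if r = q then (1 : ℂ) else 0) = (((if r = q then 1 else 0 : ℝ)) : ℂ) by
      split_ifs <;> simp, ← hreal]
    push_cast
    rfl
  · simp only [y, if_true]
    rw [show 2 * g * √(l q) * √(l q) = 2 * g * l q by rw [mul_assoc, hsq]]
    have h2 := hd q
    rw [add_comm (l q ^ 2)]
    field_simp

open Matrix in
/-- The diagonal entries of the positive square root `B` of `h² + 2g |√λ⟩⟨√λ|` and of its inverse
`C`, for an abstract finite index set. -/
lemma diag_sqrt {ι : Type*} [Fintype ι] (l : ι → ℝ) (hl : ∀ i, 0 < l i) (g : ℝ) (hg : 0 ≤ g)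
    (B : Matrix ι ι ℂ) (hB : B.IsHermitian) (hpos : ∀ v : ι → ℂ, 0 ≤ (star v ⬝ᵥ B *ᵥ v).re)
    (hA : ∀ r s, (B * B) r s =
      ((√(l r) * ((if r = s then l r else 0) + 2 * g) * √(l s) : ℝ) : ℂ))
    (q : ι) :
    B q q = ((l q * (1 + 2 / Real.pi * ∫ t in Set.Ioi (0 : ℝ),
      (2 * g * t ^ 2 * ((t ^ 2 + l q ^ 2) ^ 2)⁻¹) /
        (1 + 2 * g * ∑ p, l p * (t ^ 2 + l p ^ 2)⁻¹)) : ℝ) : ℂ) ∧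
    ∀ C : Matrix ι ι ℂ, B * C = 1 →
      C q q = (((l q)⁻¹ * (1 - 2 / Real.pi * ∫ t in Set.Ioi (0 : ℝ),
      (2 * g * l q ^ 2 * ((t ^ 2 + l q ^ 2) ^ 2)⁻¹) /
        (1 + 2 * g * ∑ p, l p * (t ^ 2 + l p ^ 2)⁻¹)) : ℝ) : ℂ) := by
  obtain ⟨β, w, hβ, hw, hBq, hres, hinv⟩ := exists_spectral_weights B hB hpos q
  have hlq := hl q
  have hpi := Real.pi_pos
  -- the Sherman–Morrison correction as a difference of scalar resolvents
  have key : ∀ t : ℝ, 0 < t → l q * (2 * g * ((t ^ 2 + l q ^ 2) ^ 2)⁻¹ /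
        (1 + 2 * g * ∑ p, l p * (t ^ 2 + l p ^ 2)⁻¹)) =
        (l q ^ 2 + t ^ 2)⁻¹ - ∑ i, w i * (β i ^ 2 + t ^ 2)⁻¹ := by
    intro t ht
    obtain ⟨y, hy, hyq⟩ := resolvent_diag l hl g hg (B * B) hA q t
    have := hres t ht.ne' y hy
    rw [hyq] at this
    have := Complex.ofReal_injective this
    linarith
  constructor
  · rw [hBq]
    congr 1
    have hI : ∫ t in Set.Ioi (0 : ℝ), (2 * g * t ^ 2 * ((t ^ 2 + l q ^ 2) ^ 2)⁻¹) /
        (1 + 2 * g * ∑ p, l p * (t ^ 2 + l p ^ 2)⁻¹) =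
        ∫ t in Set.Ioi (0 : ℝ), (l q)⁻¹ * (∑ i, w i * (β i ^ 2 * (β i ^ 2 + t ^ 2)⁻¹) -
          l q ^ 2 * (l q ^ 2 + t ^ 2)⁻¹) := by
      refine setIntegral_congr_fun measurableSet_Ioi fun t ht => ?_
      have ht : 0 < t := ht
      have e : ∀ x : ℝ, x ^ 2 * (x ^ 2 + t ^ 2)⁻¹ = 1 - t ^ 2 * (x ^ 2 + t ^ 2)⁻¹ := by
        intro x
        have : x ^ 2 + t ^ 2 ≠ 0 := by positivity
        field_simp
        ring
      have e2 : ∑ i, w i * (β i ^ 2 * (β i ^ 2 + t ^ 2)⁻¹) =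
          1 - t ^ 2 * ∑ i, w i * (β i ^ 2 + t ^ 2)⁻¹ := by
        rw [Finset.mul_sum, ← hw, ← Finset.sum_sub_distrib]
        refine Finset.sum_congr rfl fun i _ => ?_
        rw [e]; ring
      have k := key t ht
      rw [e2, e, show (1 - t ^ 2 * ∑ i, w i * (β i ^ 2 + t ^ 2)⁻¹ -
          (1 - t ^ 2 * (l q ^ 2 + t ^ 2)⁻¹)) = t ^ 2 * ((l q ^ 2 + t ^ 2)⁻¹ -
            ∑ i, w i * (β i ^ 2 + t ^ 2)⁻¹) by ring, ← k]
      field_simp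
    have hint := fun i => integral_Ioi_sq_div_sq_add_sq (hβ i)
    have hintl := integral_Ioi_sq_div_sq_add_sq hlq.le
    have h1 : ∀ i ∈ Finset.univ, Integrable (fun t : ℝ => w i * (β i ^ 2 * (β i ^ 2 + t ^ 2)⁻¹))
        (volume.restrict (Set.Ioi 0)) := fun i _ => (hint i).1.const_mul (w i)
    rw [hI, integral_const_mul, integral_sub (integrable_finsetSum _ h1) hintl.1,
      integral_finsetSum _ h1, hintl.2]
    simp only [integral_const_mul, (hint _).2]
    have : ∑ i, w i * (Real.pi / 2 * β i) = Real.pi / 2 * ∑ i, w i * β i := by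
      rw [Finset.mul_sum]; exact Finset.sum_congr rfl fun i _ => by ring
    rw [this]
    field_simp
    ring
  · intro C hC
    obtain ⟨hβ0, hCq⟩ := hinv C hC
    rw [hCq]
    congr 1
    have hI : ∫ t in Set.Ioi (0 : ℝ), (2 * g * l q ^ 2 * ((t ^ 2 + l q ^ 2) ^ 2)⁻¹) /
        (1 + 2 * g * ∑ p, l p * (t ^ 2 + l p ^ 2)⁻¹) =
        ∫ t in Set.Ioi (0 : ℝ), l q * ((l q ^ 2 + t ^ 2)⁻¹ -
          ∑ i, w i * (β i ^ 2 + t ^ 2)⁻¹) := by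
      refine setIntegral_congr_fun measurableSet_Ioi fun t ht => ?_
      rw [← key t ht]
      ring
    have hint := fun i => integral_Ioi_inv_sq_add_sq ((hβ i).lt_of_ne' (hβ0 i))
    have hintl := integral_Ioi_inv_sq_add_sq hlq
    have h1 : ∀ i ∈ Finset.univ, Integrable (fun t : ℝ => w i * (β i ^ 2 + t ^ 2)⁻¹)
        (volume.restrict (Set.Ioi 0)) := fun i _ => (hint i).1.const_mul (w i)
    rw [hI, integral_const_mul, integral_sub hintl.1 (integrable_finsetSum _ h1),
      integral_finsetSum _ h1, hintl.2]
    simp only [integral_const_mul, (hint _).2]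
    have : ∑ i, w i * (Real.pi / 2 * (β i)⁻¹) = Real.pi / 2 * ∑ i, w i * (β i)⁻¹ := by
      rw [Finset.mul_sum]; exact Finset.sum_congr rfl fun i _ => by ring
    rw [this]
    field_simp
    ring

/-! ### Matrices on the lattice supported in a finite set -/

lemma lens_finite (kF : ℝ) (hkF : 0 < kF) (ℓ : Z3) : (lens kF ℓ).Finite := by
  refine (Set.finite_Icc (fun i => ℓ i - ⌈kF⌉ : Z3) (fun i => ℓ i + ⌈kF⌉)).subset ?_
  rintro p ⟨-, hp⟩
  have h : ∀ i, |((p i - ℓ i : ℤ) : ℝ)| ≤ kF := by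
    intro i
    refine abs_le_of_sq_le_sq ?_ hkF.le
    refine le_trans ?_ hp
    exact Finset.single_le_sum (f := fun i => (((p - ℓ) i : ℤ) : ℝ) ^ 2)
      (fun j _ => sq_nonneg _) (Finset.mem_univ i)
  have h' : ∀ i, |p i - ℓ i| ≤ ⌈kF⌉ := by
    intro i
    have := (h i).trans (Int.le_ceil kF)
    exact_mod_cast this
  constructor <;> intro i <;> have := abs_le.1 (h' i) <;> simp only <;> omega

lemma lam_pos {kF : ℝ} {ℓ p : Z3} (hp : p ∈ lens kF ℓ) : 0 < lam ℓ p := by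
  have h1 : ¬ nsq p ≤ kF ^ 2 := hp.1
  have h2 : nsq (p - ℓ) ≤ kF ^ 2 := hp.2
  unfold lam
  linarith

/-- A sum over the lattice of a function vanishing off a finite set `L` is a sum over `L`. -/
lemma tsum_eq_sum_of_supp {α E : Type*} [AddCommMonoid E] [TopologicalSpace E] {L : Set α}
    [Fintype L] (f : α → E) (hf : ∀ p, p ∉ L → f p = 0) : ∑' p, f p = ∑ p : L, f p := by
  rw [tsum_eq_sum (s := L.toFinset) (fun p hp => hf p (by simpa using hp))]
  exact Finset.sum_subtype _ (by simp) f

/-- Multiplication on the left by a matrix that is diagonal on `L`. -/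
lemma matMulC_diag_left {L : Set Z3} (d : Z3 → ℂ) (A : Z3 → Z3 → ℂ) {r : Z3} (hr : r ∈ L)
    (s : Z3) : matMulC (fun r t => if r = t ∧ r ∈ L then d r else 0) A r s = d r * A r s := by
  unfold matMulC
  rw [tsum_eq_single r]
  · simp [hr]
  · intro t ht
    simp [Ne.symm ht]

/-- Multiplication on the right by a matrix that is diagonal on `L`. -/
lemma matMulC_diag_right {L : Set Z3} (d : Z3 → ℂ) (A : Z3 → Z3 → ℂ) (r : Z3) {s : Z3}
    (hs : s ∈ L) :
    matMulC A (fun r t => if r = t ∧ r ∈ L then d r else 0) r s = A r s * d s := by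
  unfold matMulC
  rw [tsum_eq_single s]
  · simp [hs]
  · intro t ht
    simp [ht]

open Matrix in
/-- Positivity in the sense of `IsPSDOn` transfers to the finite matrix indexed by `L`: extend the
test vector by zero. -/
lemma re_dotProduct_nonneg {L : Set Z3} [Fintype L] {B : Z3 → Z3 → ℂ} (hB : IsPSDOn L B)
    (v : L → ℂ) : 0 ≤ (star v ⬝ᵥ (Matrix.of fun r s : L => B r s) *ᵥ v).re := by
  let u : Z3 → ℂ := fun p => if h : p ∈ L then v ⟨p, h⟩ else 0
  have hu : ∀ p, p ∉ L → u p = 0 := fun p hp => by simp [u, hp]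
  have huv : ∀ p : L, u p = v p := fun p => by simp [u]
  have h := hB.2 u hu
  rw [tsum_eq_sum (s := L.toFinset ×ˢ L.toFinset)] at h
  · have hsub : ∀ f : Z3 → ℂ, ∑ p ∈ L.toFinset, f p = ∑ p : L, f p := fun f =>
      Finset.sum_subtype _ (by simp) f
    simp only [Finset.sum_product, hsub, huv] at h
    convert h using 2
    simp [dotProduct, mulVec, Finset.mul_sum, mul_assoc]
  · rintro ⟨a, b⟩ hab
    simp only [Finset.mem_product, Set.mem_toFinset, not_and_or] at hab
    rcases hab with h | h <;> simp [hu _ h]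

/-- The two integral identities for the diagonal entries of
`M(ℓ) = h^{−1/2}(h^{1/2}(h+2P)h^{1/2})^{1/2}h^{−1/2}` and its inverse
(Eqs. `eq:e-2k_integral` and `eq:e2kfin`). The PSD square root `B` of
`h^{1/2}(h+2P)h^{1/2}` is characterized by being PSD with the correct square, and the
inverse `N = M⁻¹` by `MN = NM = Id` on `ℓ²(L_ℓ)`. -/
theorem stmt17 (kF : ℝ) (hkF : 0 < kF) (V : Z3 → ℝ) (hV : ∀ ℓ : Z3, 0 ≤ V ℓ)
    (ℓ : Z3) (hl : ℓ ≠ 0) (q : Z3) (hq : q ∈ lens kF ℓ)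
    (B : Z3 → Z3 → ℂ)
    (hBsupp : suppOn (lens kF ℓ) B) (hBpsd : IsPSDOn (lens kF ℓ) B)
    (hBsq : matMulC B B = matMulC (sqrtH kF ℓ) (matMulC (hP2 kF V ℓ) (sqrtH kF ℓ)))
    (M : Z3 → Z3 → ℂ)
    (hM : M = matMulC (invSqrtH kF ℓ) (matMulC B (invSqrtH kF ℓ)))
    (N : Z3 → Z3 → ℂ) (hNsupp : suppOn (lens kF ℓ) N)
    (hMN : matMulC M N = idOn (lens kF ℓ)) (hNM : matMulC N M = idOn (lens kF ℓ)) :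
    M q q - 1
      = (((2 / Real.pi) * ∫ t in Set.Ioi (0 : ℝ),
          (2 * gcoef kF V ℓ * t ^ 2 * (((t ^ 2 + (lam ℓ q) ^ 2) ^ 2)⁻¹)) /
            (1 + 2 * gcoef kF V ℓ *
              ∑' p : Z3, if p ∈ lens kF ℓ then lam ℓ p * (t ^ 2 + (lam ℓ p) ^ 2)⁻¹ else 0)
          : ℝ) : ℂ) ∧
    1 - N q q
      = (((2 / Real.pi) * ∫ t in Set.Ioi (0 : ℝ),
          (2 * gcoef kF V ℓ * (lam ℓ q) ^ 2 * (((t ^ 2 + (lam ℓ q) ^ 2) ^ 2)⁻¹)) /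
            (1 + 2 * gcoef kF V ℓ *
              ∑' p : Z3, if p ∈ lens kF ℓ then lam ℓ p * (t ^ 2 + (lam ℓ p) ^ 2)⁻¹ else 0)
          : ℝ) : ℂ) := by
  have : Fintype (lens kF ℓ) := (lens_finite kF hkF ℓ).fintype
  have hg : 0 ≤ gcoef kF V ℓ := by
    have := hV ℓ
    have := Real.pi_pos
    unfold gcoef
    positivity
  have hsum : ∀ t : ℝ,
      (∑' p : Z3, if p ∈ lens kF ℓ then lam ℓ p * (t ^ 2 + (lam ℓ p) ^ 2)⁻¹ else 0) =
        ∑ p : lens kF ℓ, lam ℓ p * (t ^ 2 + (lam ℓ p) ^ 2)⁻¹ := by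
    intro t
    rw [tsum_eq_sum_of_supp (L := lens kF ℓ) _ (fun p hp => by simp [hp])]
    exact Finset.sum_congr rfl fun p _ => by simp
  simp only [hsum]
  have hl0 : ∀ p : lens kF ℓ, 0 < lam ℓ p := fun p => lam_pos p.2
  have hlq := lam_pos hq
  let B' : Matrix (lens kF ℓ) (lens kF ℓ) ℂ := Matrix.of fun r s => B r s
  have hB' : B'.IsHermitian := Matrix.IsHermitian.ext fun r s => (hBpsd.1 r s).symm
  have hA : ∀ r s : lens kF ℓ, (B' * B') r s =
      ((√(lam ℓ r) * ((if r = s then lam ℓ r else 0) + 2 * gcoef kF V ℓ) * √(lam ℓ s) : ℝ) : ℂ) := by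
    intro r s
    have h1 : (B' * B') r s = matMulC B B r s := by
      unfold matMulC
      rw [tsum_eq_sum_of_supp (L := lens kF ℓ) _ (fun p hp => by simp [hBsupp r p (Or.inr hp)])]
      rfl
    have h2 := matMulC_diag_left (fun p => ((√(lam ℓ p) : ℝ) : ℂ))
      (matMulC (hP2 kF V ℓ) (sqrtH kF ℓ)) r.2 (s : Z3)
    have h3 := matMulC_diag_right (fun p => ((√(lam ℓ p) : ℝ) : ℂ)) (hP2 kF V ℓ) (r : Z3) s.2
    rw [h1, hBsq]
    refine h2.trans ?_
    refine (congrArg _ h3).trans ?_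
    simp only [hP2, r.2, s.2, and_self, if_true, Subtype.ext_iff]
    split_ifs <;> push_cast <;> ring
  have hMe : ∀ r s : lens kF ℓ,
      M r s = ((√(lam ℓ r))⁻¹ : ℝ) * (B r s * ((√(lam ℓ s))⁻¹ : ℝ)) := by
    intro r s
    have h2 := matMulC_diag_left (fun p => (((√(lam ℓ p))⁻¹ : ℝ) : ℂ))
      (matMulC B (invSqrtH kF ℓ)) r.2 (s : Z3)
    have h3 := matMulC_diag_right (fun p => (((√(lam ℓ p))⁻¹ : ℝ) : ℂ)) B (r : Z3) s.2
    rw [hM]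
    exact h2.trans (congrArg _ h3)
  have hs0 : ∀ p : lens kF ℓ, ((√(lam ℓ p) : ℝ) : ℂ) ≠ 0 := fun p =>
    Complex.ofReal_ne_zero.2 (ne_of_gt (Real.sqrt_pos.2 (hl0 p)))
  -- `h^{-1/2} N h^{-1/2}` is the inverse of `B`
  let C : Matrix (lens kF ℓ) (lens kF ℓ) ℂ := Matrix.of fun r s =>
    ((√(lam ℓ r))⁻¹ : ℝ) * (N r s * ((√(lam ℓ s))⁻¹ : ℝ))
  have hBC : B' * C = 1 := by
    ext r s
    have h1 : ∑ p : lens kF ℓ, M r p * N p s = if r = s then 1 else 0 := by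
      have := congrFun (congrFun hMN r) s
      unfold matMulC at this
      rw [tsum_eq_sum_of_supp (L := lens kF ℓ) _ (fun p hp => by simp [hNsupp p s (Or.inl hp)])]
        at this
      rw [this]
      simp [idOn, Subtype.ext_iff]
    have h2 : (B' * C) r s =
        ((√(lam ℓ r) : ℝ) : ℂ) * (∑ p : lens kF ℓ, M r p * N p s) * ((√(lam ℓ s))⁻¹ : ℝ) := by
      rw [Matrix.mul_apply, Finset.mul_sum, Finset.sum_mul]
      refine Finset.sum_congr rfl fun p _ => ?_
      rw [hMe]
      simp only [B', C, Matrix.of_apply]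
      have := hs0 r
      push_cast
      field_simp
    rw [h2, h1, Matrix.one_apply]
    by_cases h : r = s
    · subst h
      have := hs0 r
      simp only [if_true]
      push_cast
      field_simp
    · simp [h]
  obtain ⟨e1, e2⟩ := diag_sqrt (fun p : lens kF ℓ => lam ℓ p) hl0 (gcoef kF V ℓ) hg B' hB'
    (re_dotProduct_nonneg hBpsd) (by convert hA) ⟨q, hq⟩
  have e2 := e2 C (by convert hBC)
  have hl1 : ((lam ℓ q : ℝ) : ℂ) ≠ 0 := Complex.ofReal_ne_zero.2 hlq.ne'
  have hss : ((√(lam ℓ q) : ℝ) : ℂ) * ((√(lam ℓ q) : ℝ) : ℂ) = (lam ℓ q : ℂ) := by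
    rw [← Complex.ofReal_mul, Real.mul_self_sqrt hlq.le]
  have hsq0 : ((√(lam ℓ q) : ℝ) : ℂ) ≠ 0 := hs0 ⟨q, hq⟩
  constructor
  · have h1 : M q q = (lam ℓ q : ℂ)⁻¹ * B q q := by
      have := hMe ⟨q, hq⟩ ⟨q, hq⟩
      simp only at this
      rw [this, ← hss]
      push_cast
      field_simp
    have h2 : B q q = _ := e1
    rw [h1, h2, Complex.ofReal_mul, inv_mul_cancel_left₀ hl1, Complex.ofReal_add,
      Complex.ofReal_one, add_sub_cancel_left]
  · have h1 : N q q = (lam ℓ q : ℂ) * C ⟨q, hq⟩ ⟨q, hq⟩ := by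
      simp only [C, Matrix.of_apply]
      rw [← hss]
      push_cast
      field_simp
    rw [h1, e2, Complex.ofReal_mul, Complex.ofReal_inv, mul_inv_cancel_left₀ hl1,
      Complex.ofReal_sub, Complex.ofReal_one, sub_sub_cancel]
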